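/- Let G be a connected graph with a cut vertex and let G = H₁ ∨ H₂ be a corresponding decomposition. For j = 1, 2, the natural inclusion Div(H_j) → Div(G) (extending a divisor by zero outside H_j) maps Prin(H_j) into Prin(G) and induces an injective homomorphism Jac(H_j) → Jac(G). -/

import Mathlib

/-- A finite multigraph: vertices `V`, edges `E`, each edge has an (arbitrarily
ordered) pair of endpoints.  Loops are edges whose two endpoints coincide. -/
structure Multigraph where
  V : Type
  E : Type
  [decV : DecidableEq V]
  [fintV : Fintype V]
  [decE : DecidableEq E]
  [fintE : Fintype E]
  ends : E → V × V

attribute [instance] Multigraph.decV Multigraph.fintV Multigraph.decE Multigraph.fintE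

namespace Multigraph

variable (G : Multigraph)

/-- Two vertices are adjacent if some edge joins them. -/
def Adj (v w : G.V) : Prop := ∃ e : G.E, G.ends e = (v, w) ∨ G.ends e = (w, v)

/-- A multigraph is connected if it is nonempty and any two vertices are joined by a walk. -/
def Connected : Prop := Nonempty G.V ∧ ∀ v w : G.V, Relation.ReflTransGen G.Adj v w

/-- The number of edges joining `v` and `w`. -/
def numEdges (v w : G.V) : ℕ :=
  (Finset.univ.filter fun e : G.E => G.ends e = (v, w) ∨ G.ends e = (w, v)).card

/-- The number of loops based at `v`. -/
def numLoops (v : G.V) : ℕ :=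
  (Finset.univ.filter fun e : G.E => G.ends e = (v, v)).card

/-- The valency of `v` (loops count twice). -/
def valency (v : G.V) : ℕ :=
  ∑ e : G.E, ((if (G.ends e).1 = v then 1 else 0) + (if (G.ends e).2 = v then 1 else 0))

/-- The intersection product on vertices: `(v·w)` is the number of edges joining `v` and
`w` when `v ≠ w`, and `(v·v) = -val(v) + 2 loop(v)`. -/
def inter (v w : G.V) : ℤ :=
  if v = w then -(G.valency v : ℤ) + 2 * (G.numLoops v : ℤ) else (G.numEdges v w : ℤ)

/-- The principal divisor `T_v = Σ_w (v·w) w`. -/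
def T (v : G.V) : G.V → ℤ := fun w => G.inter v w

/-- The group of principal divisors, generated by the `T_v`. -/
def Prin : AddSubgroup (G.V → ℤ) := AddSubgroup.closure (Set.range G.T)

/-- The Jacobian group `Div(G)/Prin(G)`. -/
abbrev Jac := (G.V → ℤ) ⧸ G.Prin

/-- A divisor is effective if all its coefficients are nonnegative. -/
def Effective {α : Type} (D : α → ℤ) : Prop := ∀ v, 0 ≤ D v

/-- The degree of a divisor. -/
def degree {α : Type} [Fintype α] (D : α → ℤ) : ℤ := ∑ v, D v

/-- The Baker–Norine rank of a divisor: `-1` if no effective divisor is linearly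
equivalent to `D`, and otherwise the largest `k ≥ 0` such that for every effective
divisor `E` of degree `k` some effective divisor is linearly equivalent to `D - E`. -/
noncomputable def rank (D : G.V → ℤ) : ℤ :=
  sSup {r : ℤ | r = -1 ∨ (0 ≤ r ∧ ∀ E : G.V → ℤ, Effective E → degree E = r →
      ∃ F : G.V → ℤ, Effective F ∧ D - E - F ∈ G.Prin)}

/-- An edge is a loop if its two endpoints coincide. -/
def IsLoop (e : G.E) : Prop := (G.ends e).1 = (G.ends e).2

/-- The refinement of `G` obtained by inserting `n e` new vertices in the interior of
each edge `e` (subdividing `e` into `n e + 1` edges). -/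
def subdivide (n : G.E → ℕ) : Multigraph where
  V := G.V ⊕ (Σ e : G.E, Fin (n e))
  E := Σ e : G.E, Fin (n e + 1)
  ends := fun x =>
    (if h : (x.2 : ℕ) = 0 then Sum.inl (G.ends x.1).1
        else Sum.inr ⟨x.1, ⟨(x.2 : ℕ) - 1, by have := x.2.isLt; omega⟩⟩,
     if h : (x.2 : ℕ) = n x.1 then Sum.inl (G.ends x.1).2
        else Sum.inr ⟨x.1, ⟨(x.2 : ℕ), by have := x.2.isLt; omega⟩⟩)

/-- The natural map `σ* : Div(G) → Div(G̃)` to a refinement, extending a divisor by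
zero on the new vertices. -/
def subdivMap (n : G.E → ℕ) (D : G.V → ℤ) : (G.subdivide n).V → ℤ := Sum.elim D 0

/-- `Ĝ`: the loopless refinement obtained by inserting one new vertex in the interior of
every loop-edge. -/
def hat : Multigraph := G.subdivide fun e => if (G.ends e).1 = (G.ends e).2 then 1 else 0

/-- The rank `r#_G(D) := r_{Ĝ}(σ* D)`. -/
noncomputable def rankSharp (D : G.V → ℤ) : ℤ :=
  G.hat.rank (G.subdivMap (fun e => if (G.ends e).1 = (G.ends e).2 then 1 else 0) D)

/-- A multigraph is loopless if no edge is a loop. -/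
def Loopless : Prop := ∀ e : G.E, (G.ends e).1 ≠ (G.ends e).2

/-- The genus (first Betti number) `g = |E| - |V| + 1` of a connected graph. -/
def genus : ℤ := (Fintype.card G.E : ℤ) - (Fintype.card G.V : ℤ) + 1

/-- The canonical divisor `K#_G = Σ_v (val(v) - 2) v`. -/
def canonical : G.V → ℤ := fun v => (G.valency v : ℤ) - 2

/-- The loopless graph obtained from `G` by removing all loop-edges. -/
def removeLoops : Multigraph where
  V := G.V
  E := {e : G.E // (G.ends e).1 ≠ (G.ends e).2}
  ends := fun e => G.ends e.1

/-- The virtual graph `G^ω` of a weighted graph `(G, ω)`: attach `ω v` loops at each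
vertex `v`. -/
def virt (w : G.V → ℕ) : Multigraph where
  V := G.V
  E := G.E ⊕ (Σ v : G.V, Fin (w v))
  ends := Sum.elim G.ends fun p => (p.1, p.1)

/-- The rank of a divisor on the weighted graph `(G, ω)`: `r_{(G,ω)}(D) := r#_{G^ω}(D)`. -/
noncomputable def rankW (w : G.V → ℕ) (D : G.V → ℤ) : ℤ := (G.virt w).rankSharp D

/-- The canonical divisor of the weighted graph `(G, ω)`. -/
def canonicalW (w : G.V → ℕ) : G.V → ℤ := fun v => (G.valency v : ℤ) + 2 * (w v : ℤ) - 2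

/-- The genus of the weighted graph `(G, ω)`: `b₁(G) + Σ_v ω(v)`. -/
def genusW (w : G.V → ℕ) : ℤ := G.genus + ∑ v, (w v : ℤ)

/-- The rose `R_g`: one vertex and `g` loop-edges. -/
def rose (g : ℕ) : Multigraph where
  V := Unit
  E := Fin g
  ends := fun _ => ((), ())

/-- The subgraph of `G` determined by a set of vertices and a set of edges with
endpoints among them. -/
def subgraph (Vs : Finset G.V) (Es : Finset G.E)
    (h : ∀ e ∈ Es, (G.ends e).1 ∈ Vs ∧ (G.ends e).2 ∈ Vs) : Multigraph where
  V := {x : G.V // x ∈ Vs}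
  E := {e : G.E // e ∈ Es}
  ends := fun e => (⟨(G.ends e.1).1, (h e.1 e.2).1⟩, ⟨(G.ends e.1).2, (h e.1 e.2).2⟩)

/-- Extension of a divisor on a subgraph by zero: `ι_* : Div(H) → Div(G)`. -/
def iota (Vs : Finset G.V) (D : {x : G.V // x ∈ Vs} → ℤ) : G.V → ℤ :=
  fun x => if h : x ∈ Vs then D ⟨x, h⟩ else 0

end Multigraph

namespace Multigraph

/-- A decomposition `G = H₁ ∨ H₂` of `G` associated to a cut vertex `v`:  `H₁`, `H₂` are
connected subgraphs with `V(H₁) ∩ V(H₂) = {v}`, `E(H₁) ∩ E(H₂) = ∅`, covering `G`. -/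
structure Wedge (G : Multigraph) where
  v : G.V
  V1 : Finset G.V
  V2 : Finset G.V
  hv1 : v ∈ V1
  hv2 : v ∈ V2
  E1 : Finset G.E
  E2 : Finset G.E
  cover_V : V1 ∪ V2 = Finset.univ
  inter_V : V1 ∩ V2 = {v}
  cover_E : E1 ∪ E2 = Finset.univ
  disj_E : E1 ∩ E2 = ∅
  ends1 : ∀ e ∈ E1, (G.ends e).1 ∈ V1 ∧ (G.ends e).2 ∈ V1
  ends2 : ∀ e ∈ E2, (G.ends e).1 ∈ V2 ∧ (G.ends e).2 ∈ V2
  conn1 : (G.subgraph V1 E1 ends1).Connected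
  conn2 : (G.subgraph V2 E2 ends2).Connected

/-- The first subgraph `H₁` of a wedge decomposition. -/
def Wedge.H1 {G : Multigraph} (W : G.Wedge) : Multigraph := G.subgraph W.V1 W.E1 W.ends1

/-- The second subgraph `H₂` of a wedge decomposition. -/
def Wedge.H2 {G : Multigraph} (W : G.Wedge) : Multigraph := G.subgraph W.V2 W.E2 W.ends2

variable (G : Multigraph)

/-- The divisor `div(f)` of an integer-valued function `f` on the vertices
(loops contribute zero). -/
def divOf (f : G.V → ℤ) : G.V → ℤ := fun v =>
  ∑ e : G.E, ((if (G.ends e).1 = v then f v - f (G.ends e).2 else 0)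
            + (if (G.ends e).2 = v then f v - f (G.ends e).1 else 0))

/-- An isomorphism of multigraphs (edges may be matched with either orientation). -/
structure Iso (G H : Multigraph) where
  vEquiv : G.V ≃ H.V
  eEquiv : G.E ≃ H.E
  compat : ∀ e : G.E,
    H.ends (eEquiv e) = (vEquiv (G.ends e).1, vEquiv (G.ends e).2) ∨
    H.ends (eEquiv e) = (vEquiv (G.ends e).2, vEquiv (G.ends e).1)

end Multigraph


/-!
A divisor on a multigraph is principal exactly when it is `div f` for an integer-valued function
`f` on the vertices, and `div f` splits as a sum of contributions of single edges, each of degree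
zero. Suppose that a subgraph `H` meets the edges of `G` outside `H` only in the vertex `v`. A
function on `H` extends to `G` by its value at `v`; the other edges then contribute nothing, so
principal divisors of `H` stay principal in `G`. Conversely, if `div f` is supported on `H`, then
the contribution of the edges outside `H` is supported at `v`; having degree zero it vanishes, so
`div f` is already the divisor of `f` restricted to `H`.
-/

namespace Multigraph

section Principal

variable (G : Multigraph)

theorem divOf_single (v : G.V) : G.divOf (Pi.single v 1) = -G.T v := by
  funext w
  by_cases hvw : v = w
  · -- A loop at `v` counts twice in the valency, which the term `2 * numLoops v` cancels.
    subst hvw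
    simp only [divOf, Pi.neg_apply, T, inter, if_pos, valency, numLoops, Finset.card_filter]
    push_cast
    rw [neg_add, neg_neg, Finset.mul_sum, ← sub_eq_add_neg, ← Finset.sum_sub_distrib]
    refine Finset.sum_congr rfl fun e _ => ?_
    grind
  · simp only [divOf, Pi.neg_apply, T, inter, if_neg hvw, numEdges, Finset.card_filter]
    push_cast
    rw [← Finset.sum_neg_distrib]
    refine Finset.sum_congr rfl fun e _ => ?_
    grind

theorem divOf_add (f g : G.V → ℤ) : G.divOf (f + g) = G.divOf f + G.divOf g := by
  funext w
  simp only [divOf, Pi.add_apply, ← Finset.sum_add_distrib]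
  refine Finset.sum_congr rfl fun e _ => ?_
  split_ifs <;> ring

/-- The map `f ↦ div f` as a homomorphism, used to describe the group of principal divisors as its
image. The sign convention is that of `divOf`: the indicator function of `v` goes to `-T_v`. -/
def divHom : (G.V → ℤ) →+ (G.V → ℤ) := AddMonoidHom.mk' G.divOf G.divOf_add

theorem Prin_eq_range_divHom : G.Prin = G.divHom.range := by
  have divHom_single (v : G.V) : G.divHom (Pi.single v 1) = -G.T v := G.divOf_single v
  apply le_antisymm
  · rw [Prin, AddSubgroup.closure_le]
    rintro _ ⟨v, rfl⟩
    exact neg_mem_iff.1 ⟨Pi.single v 1, divHom_single v⟩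
  · rintro _ ⟨f, rfl⟩
    rw [pi_eq_sum_univ' f, map_sum]
    refine sum_mem fun v _ => ?_
    rw [map_zsmul, divHom_single]
    exact zsmul_mem (neg_mem (AddSubgroup.subset_closure (Set.mem_range_self v))) _

theorem mem_Prin_iff {D : G.V → ℤ} : D ∈ G.Prin ↔ ∃ f, G.divOf f = D := by
  rw [Prin_eq_range_divHom]
  exact AddMonoidHom.mem_range

end Principal

section DivOn

variable (G : Multigraph)

/-- The contribution of the edges in `S` to `div f`, as a divisor on all of `G`: the divisor of `f`
on the spanning subgraph with edge set `S`. It isolates the two sides of a decomposition of `G`. -/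
def divOn (S : Finset G.E) (f : G.V → ℤ) : G.V → ℤ := fun v =>
  ∑ e ∈ S, ((if (G.ends e).1 = v then f v - f (G.ends e).2 else 0)
          + (if (G.ends e).2 = v then f v - f (G.ends e).1 else 0))

variable {G} {S : Finset G.E} {f : G.V → ℤ}

theorem divOn_add_divOn_compl (S : Finset G.E) (f : G.V → ℤ) :
    G.divOn S f + G.divOn Sᶜ f = G.divOf f :=
  funext fun _ => Finset.sum_add_sum_compl S _

theorem divOn_apply_eq_zero {w : G.V} (hw : ∀ e ∈ S, (G.ends e).1 ≠ w ∧ (G.ends e).2 ≠ w) :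
    G.divOn S f w = 0 :=
  Finset.sum_eq_zero fun e he => by
    rw [if_neg (hw e he).1, if_neg (hw e he).2, add_zero]

theorem divOn_eq_zero_of_forall_eq (hf : ∀ e ∈ S, f (G.ends e).1 = f (G.ends e).2) :
    G.divOn S f = 0 := by
  funext w
  refine Finset.sum_eq_zero fun e he => ?_
  have he_eq := hf e he
  split_ifs <;> simp_all

theorem degree_divOn : degree (G.divOn S f) = 0 := by
  simp only [degree, divOn]
  rw [Finset.sum_comm]
  refine Finset.sum_eq_zero fun e _ => ?_
  simp [Finset.sum_add_distrib]

theorem divOn_eq_zero_of_forall_ne {v : G.V} (hv : ∀ w ≠ v, G.divOn S f w = 0) :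
    G.divOn S f = 0 := by
  funext w
  by_cases hw : w = v
  · subst hw
    have hdeg : ∑ u, G.divOn S f u = 0 := degree_divOn
    rwa [Fintype.sum_eq_single w hv] at hdeg
  · exact hv w hw

end DivOn

section Subgraph

variable {G : Multigraph} {Vs : Finset G.V} {Es : Finset G.E}

theorem iota_apply_of_mem (D : {x : G.V // x ∈ Vs} → ℤ) {x : G.V} (hx : x ∈ Vs) :
    G.iota Vs D x = D ⟨x, hx⟩ :=
  dif_pos hx

theorem iota_apply_of_notMem (D : {x : G.V // x ∈ Vs} → ℤ) {x : G.V} (hx : x ∉ Vs) :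
    G.iota Vs D x = 0 :=
  dif_neg hx

theorem iota_injective : Function.Injective (G.iota Vs) := by
  intro D D' hD
  funext x
  rw [← iota_apply_of_mem D x.2, hD, iota_apply_of_mem D' x.2]

theorem iota_sub (D D' : {x : G.V // x ∈ Vs} → ℤ) :
    G.iota Vs (D - D') = G.iota Vs D - G.iota Vs D' := by
  funext x
  by_cases hx : x ∈ Vs <;> simp [iota, hx]

theorem divOn_apply_eq_zero_of_notMem (hends : ∀ e ∈ Es, (G.ends e).1 ∈ Vs ∧ (G.ends e).2 ∈ Vs)
    {f : G.V → ℤ} {w : G.V} (hw : w ∉ Vs) : G.divOn Es f w = 0 :=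
  divOn_apply_eq_zero fun e he =>
    ⟨ne_of_mem_of_not_mem (hends e he).1 hw, ne_of_mem_of_not_mem (hends e he).2 hw⟩

theorem divOf_subgraph_apply (hends : ∀ e ∈ Es, (G.ends e).1 ∈ Vs ∧ (G.ends e).2 ∈ Vs)
    (f : G.V → ℤ) (x : {x : G.V // x ∈ Vs}) :
    (G.subgraph Vs Es hends).divOf (Vs.restrict f) x = G.divOn Es f x := by
  rw [divOn, ← Finset.sum_coe_sort Es]
  refine Finset.sum_congr rfl fun e _ => ?_
  have fst_eq_iff : ((G.subgraph Vs Es hends).ends e).1 = x ↔ (G.ends e.1).1 = x.1 :=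
    Subtype.ext_iff
  have snd_eq_iff : ((G.subgraph Vs Es hends).ends e).2 = x ↔ (G.ends e.1).2 = x.1 :=
    Subtype.ext_iff
  simp only [fst_eq_iff, snd_eq_iff]
  rfl

theorem iota_divOf_subgraph (hends : ∀ e ∈ Es, (G.ends e).1 ∈ Vs ∧ (G.ends e).2 ∈ Vs)
    (f : G.V → ℤ) :
    G.iota Vs ((G.subgraph Vs Es hends).divOf (Vs.restrict f)) = G.divOn Es f := by
  funext w
  by_cases hw : w ∈ Vs
  · exact (iota_apply_of_mem _ hw).trans (divOf_subgraph_apply hends f ⟨w, hw⟩)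
  · exact (iota_apply_of_notMem _ hw).trans (divOn_apply_eq_zero_of_notMem hends hw).symm

variable (G Vs Es) in
/-- The subgraph with vertices `Vs` and edges `Es` meets the remaining edges of `G` at most in the
vertex `v`, which need not belong to `Vs`. Both summands of a wedge are attached at the cut
vertex. -/
def IsAttachedAt (v : G.V) : Prop :=
  ∀ e ∉ Es, ((G.ends e).1 ∈ Vs → (G.ends e).1 = v) ∧ ((G.ends e).2 ∈ Vs → (G.ends e).2 = v)

variable {v : G.V}

theorem IsAttachedAt.divOn_compl_eq_zero (hv : G.IsAttachedAt Vs Es v)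
    (hends : ∀ e ∈ Es, (G.ends e).1 ∈ Vs ∧ (G.ends e).2 ∈ Vs)
    {f : G.V → ℤ} (hf : ∀ w ∉ Vs, G.divOf f w = 0) : G.divOn Esᶜ f = 0 := by
  refine divOn_eq_zero_of_forall_ne (v := v) fun w hwv => ?_
  by_cases hw : w ∈ Vs
  · refine divOn_apply_eq_zero fun e he => ?_
    have he_attached := hv e (Finset.mem_compl.1 he)
    exact ⟨fun h => hwv (h ▸ he_attached.1 (h ▸ hw)), fun h => hwv (h ▸ he_attached.2 (h ▸ hw))⟩
  · have hEs : G.divOn Es f w = 0 := divOn_apply_eq_zero_of_notMem hends hw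
    have hsplit := congrFun (divOn_add_divOn_compl Es f) w
    rwa [Pi.add_apply, hEs, zero_add, hf w hw] at hsplit

theorem IsAttachedAt.exists_extension_divOn_compl_eq_zero (hv : G.IsAttachedAt Vs Es v)
    (g : {x : G.V // x ∈ Vs} → ℤ) :
    ∃ f : G.V → ℤ, Vs.restrict f = g ∧ G.divOn Esᶜ f = 0 := by
  let f : G.V → ℤ := fun x => if hx : x ∈ Vs then g ⟨x, hx⟩ else G.iota Vs g v
  have hf {x : G.V} (hx : x ∈ Vs → x = v) : f x = G.iota Vs g v := by
    by_cases hxV : x ∈ Vs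
    · obtain rfl := hx hxV
      simp only [f, iota, dif_pos hxV]
    · exact dif_neg hxV
  refine ⟨f, funext fun x => dif_pos x.2, divOn_eq_zero_of_forall_eq fun e he => ?_⟩
  have he_attached := hv e (Finset.mem_compl.1 he)
  rw [hf he_attached.1, hf he_attached.2]

theorem IsAttachedAt.iota_mem_Prin_iff (hv : G.IsAttachedAt Vs Es v)
    (hends : ∀ e ∈ Es, (G.ends e).1 ∈ Vs ∧ (G.ends e).2 ∈ Vs) {D : {x : G.V // x ∈ Vs} → ℤ} :
    G.iota Vs D ∈ G.Prin ↔ D ∈ (G.subgraph Vs Es hends).Prin := by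
  refine Iff.trans G.mem_Prin_iff (Iff.trans ?_ (G.subgraph Vs Es hends).mem_Prin_iff.symm)
  constructor
  · rintro ⟨f, hf⟩
    refine ⟨Vs.restrict f, iota_injective ?_⟩
    have hcompl : G.divOn Esᶜ f = 0 :=
      hv.divOn_compl_eq_zero hends fun w hw => by rw [hf, iota_apply_of_notMem D hw]
    calc G.iota Vs ((G.subgraph Vs Es hends).divOf (Vs.restrict f))
      _ = G.divOn Es f := iota_divOf_subgraph hends f
      _ = G.divOf f := by rw [← divOn_add_divOn_compl Es, hcompl, add_zero]
      _ = G.iota Vs D := hf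
  · rintro ⟨g, rfl⟩
    obtain ⟨f, rfl, hcompl⟩ := hv.exists_extension_divOn_compl_eq_zero g
    refine ⟨f, ?_⟩
    calc G.divOf f
      _ = G.divOn Es f := by rw [← divOn_add_divOn_compl Es, hcompl, add_zero]
      _ = G.iota Vs ((G.subgraph Vs Es hends).divOf (Vs.restrict f)) :=
        (iota_divOf_subgraph hends f).symm

end Subgraph

namespace Wedge

variable {G : Multigraph} (W : G.Wedge)

theorem isAttachedAt_H1 : G.IsAttachedAt W.V1 W.E1 W.v := by
  have eq_v {x : G.V} (h1 : x ∈ W.V1) (h2 : x ∈ W.V2) : x = W.v :=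
    Finset.mem_singleton.1 (W.inter_V ▸ Finset.mem_inter.2 ⟨h1, h2⟩)
  intro e he
  have he2 : e ∈ W.E2 :=
    (Finset.mem_union.1 (W.cover_E ▸ Finset.mem_univ e)).resolve_left he
  exact ⟨fun h => eq_v h (W.ends2 e he2).1, fun h => eq_v h (W.ends2 e he2).2⟩

/-- The wedge decomposition `G = H₂ ∨ H₁` obtained from `G = H₁ ∨ H₂`. -/
def symm : G.Wedge where
  v := W.v
  V1 := W.V2
  V2 := W.V1
  hv1 := W.hv2
  hv2 := W.hv1
  E1 := W.E2
  E2 := W.E1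
  cover_V := (Finset.union_comm _ _).trans W.cover_V
  inter_V := (Finset.inter_comm _ _).trans W.inter_V
  cover_E := (Finset.union_comm _ _).trans W.cover_E
  disj_E := (Finset.inter_comm _ _).trans W.disj_E
  ends1 := W.ends2
  ends2 := W.ends1
  conn1 := W.conn2
  conn2 := W.conn1

end Wedge

end Multigraph

theorem wedge_jacobian_injective_general {G : Multigraph} {Vs : Finset G.V} {Es : Finset G.E}
    (hends : ∀ e ∈ Es, (G.ends e).1 ∈ Vs ∧ (G.ends e).2 ∈ Vs) {v : G.V}
    (hv : G.IsAttachedAt Vs Es v) :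
    (∀ D ∈ (G.subgraph Vs Es hends).Prin, G.iota Vs D ∈ G.Prin) ∧
    (∀ D D' : (G.subgraph Vs Es hends).V → ℤ, G.iota Vs D - G.iota Vs D' ∈ G.Prin →
      D - D' ∈ (G.subgraph Vs Es hends).Prin) :=
  ⟨fun _ hD => (hv.iota_mem_Prin_iff hends).2 hD,
    fun D D' h => (hv.iota_mem_Prin_iff hends).1 (Multigraph.iota_sub D D' ▸ h)⟩

open Multigraph in
/-- For a cut-vertex decomposition `G = H₁ ∨ H₂` of a connected graph,
extension by zero `Div(H_j) → Div(G)` maps `Prin(H_j)` into `Prin(G)` and induces an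
injective homomorphism `Jac(H_j) → Jac(G)`. -/
theorem wedge_jacobian_injective (G : Multigraph) (hG : G.Connected) (W : G.Wedge) :
    (∀ D ∈ W.H1.Prin, G.iota W.V1 D ∈ G.Prin) ∧
    (∀ D ∈ W.H2.Prin, G.iota W.V2 D ∈ G.Prin) ∧
    (∀ D D' : W.H1.V → ℤ, G.iota W.V1 D - G.iota W.V1 D' ∈ G.Prin → D - D' ∈ W.H1.Prin) ∧
    (∀ D D' : W.H2.V → ℤ, G.iota W.V2 D - G.iota W.V2 D' ∈ G.Prin → D - D' ∈ W.H2.Prin) := by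
  obtain ⟨map1, inj1⟩ := wedge_jacobian_injective_general W.ends1 W.isAttachedAt_H1
  obtain ⟨map2, inj2⟩ := wedge_jacobian_injective_general W.ends2 W.symm.isAttachedAt_H1
  exact ⟨map1, map2, inj1, inj2⟩
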